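/- For w ∈ ℂ, the integral of log|w − a| over the Riemann sphere with respect to the normalized spherical area element dρ(a) = (1/π)(1+|a|²)^{-2} dm(a) equals log√(1+|w|²). That is, (1/π) ∫_ℂ log|w − a| (1+|a|²)^{-2} dm(a) = (1/2) log(1+|w|²). -/

import Mathlib

open MeasureTheory Real
open Set Filter Topology

lemma abs_log_le_add_inv {r : ℝ} (hr : 0 < r) : |log r| ≤ r + r⁻¹ := by
  have h1 := log_le_self hr.le
  have h2 := log_le_self (inv_pos.2 hr).le
  rw [log_inv] at h2
  have := inv_pos.2 hr
  rw [abs_le]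
  constructor <;> linarith

lemma posLog_le_self {x : ℝ} (hx : 0 ≤ x) : log⁺ x ≤ x :=
  max_le hx (log_le_self hx)

/-- A function of growth `O(1 + r + r⁻¹)` is integrable against the radial spherical density. -/
lemma integrableOn_mul_sphericalDensity {g : ℝ → ℝ} (hg : AEStronglyMeasurable g) {C : ℝ}
    (hC : ∀ r, 0 < r → |g r| ≤ C * (1 + r + r⁻¹)) :
    IntegrableOn (fun r ↦ r * (1 + r ^ 2)⁻¹ ^ 2 * g r) (Ioi 0) := by
  refine Integrable.mono' ((integrable_inv_one_add_sq.const_mul (2 * C)).integrableOn)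
    ((Measurable.aestronglyMeasurable (by fun_prop)).mul hg).restrict ?_
  filter_upwards [ae_restrict_mem measurableSet_Ioi] with r hr
  have hr : 0 < r := hr
  have h := hC r hr
  have hC0 : 0 ≤ C := by
    have := (abs_nonneg _).trans h
    exact nonneg_of_mul_nonneg_left this (by positivity)
  rw [norm_eq_abs, abs_mul, abs_of_nonneg (by positivity)]
  calc r * (1 + r ^ 2)⁻¹ ^ 2 * |g r|
      ≤ r * (1 + r ^ 2)⁻¹ ^ 2 * (C * (1 + r + r⁻¹)) := by gcongr
    _ = C * ((1 + r ^ 2)⁻¹ ^ 2 * (r + r ^ 2 + 1)) := by field_simp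
    _ ≤ C * ((1 + r ^ 2)⁻¹ ^ 2 * (2 * (1 + r ^ 2))) := by
        gcongr
        nlinarith [sq_nonneg (r - 1)]
    _ = 2 * C * (1 + r ^ 2)⁻¹ := by field_simp

lemma integrableOn_log_mul_sphericalDensity :
    IntegrableOn (fun r : ℝ ↦ r * (1 + r ^ 2)⁻¹ ^ 2 * log r) (Ioi 0) :=
  integrableOn_mul_sphericalDensity (C := 1) measurable_log.aestronglyMeasurable fun r hr ↦ by
    linarith [abs_log_le_add_inv hr]

lemma integrableOn_posLog_mul_sphericalDensity {ρ : ℝ} (hρ : 0 ≤ ρ) :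
    IntegrableOn (fun r : ℝ ↦ r * (1 + r ^ 2)⁻¹ ^ 2 * log⁺ (r⁻¹ * ρ)) (Ioi 0) := by
  refine integrableOn_mul_sphericalDensity (C := ρ)
    (Measurable.aestronglyMeasurable (by fun_prop)) fun r hr ↦ ?_
  rw [abs_of_nonneg posLog_nonneg]
  refine (posLog_le_self (by positivity)).trans ?_
  nlinarith [mul_nonneg hρ hr.le]

/-- A primitive of `2 r log r / (1 + r²)²` vanishing at `0` and at infinity. -/
noncomputable def logSphericalPrimitive (r : ℝ) : ℝ :=
  r ^ 2 * (1 + r ^ 2)⁻¹ * log r - 1 / 2 * log (1 + r ^ 2)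

lemma continuous_logSphericalPrimitive : Continuous logSphericalPrimitive := by
  have h : logSphericalPrimitive =
      fun r ↦ r * (1 + r ^ 2)⁻¹ * (r * log r) - 1 / 2 * log (1 + r ^ 2) := by
    ext r
    rw [logSphericalPrimitive]
    ring
  have h0 : ∀ r : ℝ, 1 + r ^ 2 ≠ 0 := fun r ↦ by positivity
  rw [h]
  have := continuous_mul_log
  fun_prop (disch := assumption)

lemma hasDerivAt_sq_div_one_add_sq (r : ℝ) :
    HasDerivAt (fun r : ℝ ↦ r ^ 2 * (1 + r ^ 2)⁻¹) (2 * (r * (1 + r ^ 2)⁻¹ ^ 2)) r := by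
  have h0 : 1 + r ^ 2 ≠ 0 := by positivity
  have h1 := hasDerivAt_pow 2 r
  refine (h1.mul ((h1.const_add 1).inv h0)).congr_deriv ?_
  simp only [Pi.inv_apply]
  push_cast
  field_simp
  ring

lemma hasDerivAt_logSphericalPrimitive {r : ℝ} (hr : 0 < r) :
    HasDerivAt logSphericalPrimitive (2 * (r * (1 + r ^ 2)⁻¹ ^ 2 * log r)) r := by
  have h0 : 1 + r ^ 2 ≠ 0 := by positivity
  refine (((hasDerivAt_sq_div_one_add_sq r).mul (hasDerivAt_log hr.ne')).sub
    ((((hasDerivAt_pow 2 r).const_add 1).log h0).const_mul (1 / 2))).congr_deriv ?_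
  push_cast
  field_simp
  ring

lemma tendsto_logSphericalPrimitive_atTop :
    Tendsto logSphericalPrimitive atTop (𝓝 0) := by
  have h1 : Tendsto (fun r : ℝ ↦ 1 / 2 * log (r ^ 2 * (1 + r ^ 2)⁻¹)) atTop (𝓝 0) := by
    have h : Tendsto (fun r : ℝ ↦ r ^ 2 * (1 + r ^ 2)⁻¹) atTop (𝓝 1) := by
      have := (tendsto_inv_atTop_zero (𝕜 := ℝ)).comp
        (tendsto_atTop_add_const_left atTop 1 (tendsto_pow_atTop (α := ℝ) two_ne_zero))
      refine (this.const_sub 1).congr' ?_ |>.trans (by simp)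
      refine Eventually.of_forall fun r ↦ ?_
      simp only [Function.comp_apply]
      have : 1 + r ^ 2 ≠ 0 := by positivity
      field_simp
      ring
    simpa using (h.log one_ne_zero).const_mul (1 / 2 : ℝ)
  have h2 : Tendsto (fun r : ℝ ↦ log r * (1 + r ^ 2)⁻¹) atTop (𝓝 0) := by
    refine squeeze_zero' ?_ ?_ tendsto_inv_atTop_zero
    · filter_upwards [eventually_ge_atTop 1] with r hr
      exact mul_nonneg (log_nonneg hr) (by positivity)
    · filter_upwards [eventually_ge_atTop 1] with r hr
      have hr0 : 0 < r := by linarith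
      rw [← div_eq_mul_inv, div_le_iff₀ (by positivity), inv_mul_eq_div, le_div_iff₀ hr0]
      nlinarith [log_le_self hr0.le]
  refine (h1.sub h2).congr' ?_ |>.trans (by simp)
  filter_upwards [eventually_gt_atTop 0] with r hr
  have h0 : 1 + r ^ 2 ≠ 0 := by positivity
  rw [log_mul (by positivity) (by positivity), log_inv, log_pow, logSphericalPrimitive]
  push_cast
  field_simp
  ring

lemma integral_log_mul_sphericalDensity :
    ∫ r in Ioi (0 : ℝ), r * (1 + r ^ 2)⁻¹ ^ 2 * log r = 0 := by
  have h := integral_Ioi_of_hasDerivAt_of_tendsto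
    continuous_logSphericalPrimitive.continuousWithinAt
    (fun r hr ↦ hasDerivAt_logSphericalPrimitive hr)
    (integrableOn_log_mul_sphericalDensity.const_mul 2) tendsto_logSphericalPrimitive_atTop
  rw [integral_const_mul] at h
  simp only [logSphericalPrimitive] at h
  norm_num at h
  simpa using h

lemma integral_posLog_mul_sphericalDensity {ρ : ℝ} (hρ : 0 ≤ ρ) :
    ∫ r in Ioi (0 : ℝ), r * (1 + r ^ 2)⁻¹ ^ 2 * log⁺ (r⁻¹ * ρ) = 1 / 4 * log (1 + ρ ^ 2) := by
  have hsub : ∫ r in Ioi (0 : ℝ), r * (1 + r ^ 2)⁻¹ ^ 2 * log⁺ (r⁻¹ * ρ)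
      = ∫ r in (0 : ℝ)..ρ, r * (1 + r ^ 2)⁻¹ ^ 2 * log⁺ (r⁻¹ * ρ) := by
    rw [intervalIntegral.integral_of_le hρ]
    refine setIntegral_eq_of_subset_of_forall_sdiff_eq_zero measurableSet_Ioi
      Ioc_subset_Ioi_self fun r hr ↦ ?_
    have h0 : 0 < r := hr.1
    have h1 : ρ < r := by
      by_contra! h
      exact hr.2 ⟨h0, h⟩
    rw [(posLog_eq_zero_iff _).2, mul_zero]
    rw [abs_of_nonneg (by positivity), inv_mul_le_one₀ h0]
    exact h1.le
  have hint := (integrableOn_posLog_mul_sphericalDensity hρ).mono_set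
    (Ioc_subset_Ioi_self : Ioc 0 ρ ⊆ Ioi 0)
  have h0 : ∀ r : ℝ, 1 + r ^ 2 ≠ 0 := fun r ↦ by positivity
  have h := intervalIntegral.integral_eq_sub_of_hasDerivAt_of_le hρ
    (f := fun r ↦ r ^ 2 * (1 + r ^ 2)⁻¹ * log ρ - logSphericalPrimitive r)
    (f' := fun r ↦ 2 * (r * (1 + r ^ 2)⁻¹ ^ 2 * log⁺ (r⁻¹ * ρ)))
    (by
      have := continuous_logSphericalPrimitive
      exact Continuous.continuousOn (by fun_prop (disch := assumption)))
    (fun r hr ↦ by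
      have hr0 : 0 < r := hr.1
      have hρ0 : 0 < ρ := hr0.trans hr.2
      rw [posLog_eq_log, log_mul (by positivity) hρ0.ne', log_inv]
      · refine (((hasDerivAt_sq_div_one_add_sq r).mul_const (log ρ)).sub
          (hasDerivAt_logSphericalPrimitive hr0)).congr_deriv ?_
        ring
      · rw [abs_of_nonneg (by positivity), one_le_inv_mul₀ hr0]
        exact hr.2.le)
    (((intervalIntegrable_iff_integrableOn_Ioc_of_le hρ).2 hint).const_mul 2)
  rw [intervalIntegral.integral_const_mul] at h
  simp only [logSphericalPrimitive, sub_sub_cancel, ne_eq, OfNat.ofNat_ne_zero, not_false_eq_true,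
    zero_pow, add_zero, log_one, mul_zero, zero_mul, sub_zero] at h
  rw [hsub]
  linarith

lemma periodic_log_norm_sub_circleMap (w : ℂ) (r : ℝ) :
    Function.Periodic (fun θ ↦ log ‖w - circleMap 0 r θ‖) (2 * π) := fun θ ↦ by
  simp only [periodic_circleMap 0 r θ]

lemma integrableOn_log_norm_sub_circleMap (w : ℂ) (r : ℝ) :
    IntegrableOn (fun θ ↦ log ‖w - circleMap 0 r θ‖) (Ioo (-π) π) := by
  have h : IntervalIntegrable (fun θ ↦ log ‖w - circleMap 0 r θ‖) volume 0 (2 * π) := by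
    simpa only [CircleIntegrable, norm_sub_rev] using
      circleIntegrable_log_norm_sub_const (a := w) (c := 0) r
  have h' := (periodic_log_norm_sub_circleMap w r).intervalIntegrable₀ two_pi_pos.ne' h (-π) π
  rw [← integrableOn_Ioc_iff_integrableOn_Ioo]
  exact (intervalIntegrable_iff_integrableOn_Ioc_of_le (by linarith [pi_pos])).1 h'

lemma integral_log_norm_sub_circleMap (w : ℂ) {r : ℝ} (hr : 0 < r) :
    ∫ θ in Ioo (-π) π, log ‖w - circleMap 0 r θ‖ =
      2 * π * (log r + log⁺ (r⁻¹ * ‖w‖)) := by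
  have h := circleAverage_log_norm_sub_const_eq_log_radius_add_posLog (a := w) (c := 0) hr.ne'
  rw [zero_sub, norm_neg] at h
  rw [← h, circleAverage, smul_eq_mul, mul_inv_cancel_left₀ two_pi_pos.ne',
    ← integral_Ioc_eq_integral_Ioo, ← intervalIntegral.integral_of_le (by linarith [pi_pos])]
  have := (periodic_log_norm_sub_circleMap w r).intervalIntegral_add_eq (-π) 0
  rw [show -π + 2 * π = π by ring, zero_add] at this
  simpa only [norm_sub_rev] using this

lemma integral_abs_log_norm_sub_circleMap_le (w : ℂ) {r : ℝ} (hr : 0 < r) :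
    ∫ θ in Ioo (-π) π, |log ‖w - circleMap 0 r θ‖| ≤ 2 * π * (2 * (‖w‖ + r) - log r) := by
  have hL := integrableOn_log_norm_sub_circleMap w r
  have hc : IntegrableOn (fun _ : ℝ ↦ 2 * (‖w‖ + r)) (Ioo (-π) π) :=
    integrableOn_const (by simp)
  calc ∫ θ in Ioo (-π) π, |log ‖w - circleMap 0 r θ‖|
      ≤ ∫ θ in Ioo (-π) π, (2 * (‖w‖ + r) - log ‖w - circleMap 0 r θ‖) := by
        refine integral_mono hL.abs (hc.sub hL) fun θ ↦ ?_
        have h1 : ‖w - circleMap 0 r θ‖ ≤ ‖w‖ + r := by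
          simpa [abs_of_pos hr] using norm_sub_le w (circleMap 0 r θ)
        have h2 := log_le_self (norm_nonneg (w - circleMap 0 r θ))
        have h3 := norm_nonneg (w - circleMap 0 r θ)
        simp only [abs_le]
        constructor <;> linarith
    _ = 2 * π * (2 * (‖w‖ + r) - (log r + log⁺ (r⁻¹ * ‖w‖))) := by
        rw [integral_sub hc hL, integral_log_norm_sub_circleMap w hr, setIntegral_const,
          smul_eq_mul, volume_real_Ioo_of_le (by linarith [pi_pos])]
        ring
    _ ≤ 2 * π * (2 * (‖w‖ + r) - log r) := by
        gcongr
        linarith [posLog_nonneg (x := r⁻¹ * ‖w‖)]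

lemma integrableOn_polar_log_norm_sub (w : ℂ) :
    IntegrableOn (fun p : ℝ × ℝ ↦
      p.1 * (1 + p.1 ^ 2)⁻¹ ^ 2 * log ‖w - circleMap 0 p.1 p.2‖) (Ioi 0 ×ˢ Ioo (-π) π) := by
  have hmeas : Measurable fun p : ℝ × ℝ ↦ log ‖w - circleMap 0 p.1 p.2‖ := by
    unfold circleMap
    fun_prop
  rw [IntegrableOn, Measure.volume_eq_prod, ← Measure.prod_restrict, integrable_prod_iff
    (Measurable.aestronglyMeasurable (by fun_prop))]
  refine ⟨Eventually.of_forall fun r ↦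
    (integrableOn_log_norm_sub_circleMap w r).const_mul (r * (1 + r ^ 2)⁻¹ ^ 2), ?_⟩
  have key : IntegrableOn (fun r ↦ r * (1 + r ^ 2)⁻¹ ^ 2 *
      ∫ θ in Ioo (-π) π, |log ‖w - circleMap 0 r θ‖|) (Ioi 0) := by
    refine integrableOn_mul_sphericalDensity (C := 2 * π * (2 * ‖w‖ + 3)) ?_ fun r hr ↦ ?_
    · exact (hmeas.abs.stronglyMeasurable.integral_prod_right').aestronglyMeasurable
    · rw [abs_of_nonneg (integral_nonneg fun _ ↦ abs_nonneg _)]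
      refine (integral_abs_log_norm_sub_circleMap_le w hr).trans ?_
      rw [mul_assoc (2 * π)]
      refine mul_le_mul_of_nonneg_left ?_ two_pi_pos.le
      have h := (abs_le.1 (abs_log_le_add_inv hr)).1
      have hi := inv_pos.2 hr
      nlinarith [mul_nonneg (norm_nonneg w) hr.le, mul_nonneg (norm_nonneg w) hi.le]
  refine key.congr_fun (fun r hr ↦ ?_) measurableSet_Ioi
  have hr : 0 < r := hr
  simp only [norm_mul, norm_eq_abs]
  rw [integral_const_mul, ← abs_mul, abs_of_nonneg (by positivity)]

/-- **Potential of the spherical measure.** For `w ∈ ℂ`,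
`(1/π) ∫_ℂ log|w − a| (1+|a|²)⁻² dm(a) = (1/2) log(1+|w|²)`,
where `dm` is Lebesgue area measure on `ℂ`. -/
theorem spherical_potential (w : ℂ) :
    (1 / Real.pi) * ∫ a : ℂ, Real.log ‖w - a‖ * (1 + ‖a‖ ^ 2)⁻¹ ^ 2
      = (1 / 2) * Real.log (1 + ‖w‖ ^ 2) := by
  have hpolar : ∫ a : ℂ, log ‖w - a‖ * (1 + ‖a‖ ^ 2)⁻¹ ^ 2 =
      ∫ p in Ioi (0 : ℝ) ×ˢ Ioo (-π) π,
        p.1 * (1 + p.1 ^ 2)⁻¹ ^ 2 * log ‖w - circleMap 0 p.1 p.2‖ := by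
    rw [← Complex.integral_comp_polarCoord_symm]
    refine integral_congr_ae (Eventually.of_forall fun p ↦ ?_)
    have hp : Complex.polarCoord.symm p = circleMap 0 p.1 p.2 := by
      simp [circleMap, Complex.exp_mul_I]
    simp only [Complex.norm_polarCoord_symm, sq_abs, smul_eq_mul]
    rw [hp]
    ring
  have hradial : ∫ a : ℂ, log ‖w - a‖ * (1 + ‖a‖ ^ 2)⁻¹ ^ 2 =
      2 * π * ∫ r in Ioi (0 : ℝ), (r * (1 + r ^ 2)⁻¹ ^ 2 * log r +
        r * (1 + r ^ 2)⁻¹ ^ 2 * log⁺ (r⁻¹ * ‖w‖)) := by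
    rw [hpolar, Measure.volume_eq_prod, setIntegral_prod _ (integrableOn_polar_log_norm_sub w),
      ← integral_const_mul]
    refine setIntegral_congr_fun measurableSet_Ioi fun r hr ↦ ?_
    simp only
    rw [integral_const_mul, integral_log_norm_sub_circleMap w hr]
    ring
  rw [hradial, integral_add integrableOn_log_mul_sphericalDensity
    (integrableOn_posLog_mul_sphericalDensity (norm_nonneg w)),
    integral_log_mul_sphericalDensity, integral_posLog_mul_sphericalDensity (norm_nonneg w)]
  field_simp
  ring
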